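/- Monotonicity of regularized 𝒱_t norms in the regularization scale: Let d,n be positive integers, σ>0, 𝕄=(m₁,…,m_n)∈ℕⁿ and m:=m₁+…+m_n. For μ∈(0,1] write [μ]:=μ^{1/σ} and let K̃_μ be the fundamental solution of (1−[μ]²Δ)^{d+2} on ℝ^d, i.e. the nonnegative integrable function with ∫K̃_μ=1 whose Fourier transform equals ξ↦(1+[μ]²|ξ|²)^{−(d+2)}. Then for all 0<η≤μ≤1 and all V∈𝒱_t^𝕄 one has ‖K̃_μ^{⊗(n+m)}∗V‖_{𝒱_t^𝕄} ≤ ‖K̃_η^{⊗(n+m)}∗V‖_{𝒱_t^𝕄}, where K̃_μ^{⊗(n+m)}∗V denotes the convolution of V with K̃_μ in each of its n+m ℝ^d-variables. -/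

import Mathlib

/-!
The coarser kernel is a further average of the finer one: with `a = [μ]` and `b = [η]`, `b ≤ a`, the
quotient of the two Fourier transforms is `((1 + b²|ξ|²) / (1 + a²|ξ|²))^(d+2)`. Writing
`(1 + b²s) / (1 + a²s) = r + (1 - r) / (1 + a²s)` with `r = b² / a² ∈ [0, 1]`, and observing that
`1 / (1 + a²|ξ|²)` is the characteristic function of `a √(2T) Z` (`T` exponential of rate one, `Z` an
independent standard Gaussian vector), this quotient is the characteristic function of a probability
measure (`exists_ratio`). Since finite measures are determined by their characteristic functions,
`K̃_μ^{⊗(n+m)} = Q ∗ K̃_η^{⊗(n+m)}` for a probability measure `Q` (`exists_tensor_conv`).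

Averaging over translations does not increase the norm: by `slice_sub`, translating a function with
the periodicity of `V` by `u` changes the integral over `x₂, …, x_n, y₁, …, y_m` only through the
value of `x₁`. This rests on translation invariance of Lebesgue measure in the `y`-variables and of
the integral of a periodic function over the fundamental domain (`setLIntegral_fundDom_sub`). Hence
`slice_cv_conv_le` follows from Tonelli's theorem, the iterated convolution agreeing with the
convolution by `Q ∗ K̃_η^{⊗(n+m)}` almost everywhere on each slice because `‖V‖ < ∞`. The norm of a
regularized function is only ever compared through extended nonnegative integrals, which are finite,
so that passing back to `vtNorm` (`vtNorm_eq`) is harmless.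
-/

open MeasureTheory
open scoped ENNReal

noncomputable section

/-- Points of `ℝ^d`. -/
abbrev Vd (d : ℕ) := Fin d → ℝ

/-- The Fourier transform with the convention `𝓕f(ξ) = ∫ f(x) e^{-i⟨x,ξ⟩} dx`. -/
def ft (d : ℕ) (f : Vd d → ℝ) (ξ : Vd d) : ℂ :=
  ∫ x : Vd d, Complex.exp (-Complex.I * (∑ i, (x i : ℂ) * (ξ i : ℂ))) * (f x : ℂ)

/-- The family `μ ↦ K̃_μ` of fundamental solutions of `(1 - [μ]²Δ)^{d+2}`, `[μ] = μ^{1/σ}`. -/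
def IsBessel (d : ℕ) (σ : ℝ) (K : ℝ → Vd d → ℝ) : Prop :=
  ∀ μ ∈ Set.Ioc (0 : ℝ) 1,
    (∀ x, 0 ≤ K μ x) ∧ Integrable (K μ) ∧ (∫ x, K μ x) = 1 ∧
    ∀ ξ : Vd d,
      ft d (K μ) ξ
        = (((1 + (μ ^ (1 / σ)) ^ 2 * ∑ i, ξ i ^ 2) ^ (d + 2) : ℝ) : ℂ)⁻¹

/-- A fundamental domain `[-π,π)^d` of the torus `(ℝ/2πℤ)^d`. -/
def fundDom (d : ℕ) : Set (Vd d) := Set.univ.pi fun _ : Fin d => Set.Ico (-Real.pi) Real.pi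

/-- The `𝒱_t` norm: the supremum over the first `x`-variable of the integral of `|V|`
over the remaining `x`-variables (in a fundamental domain of the torus) and over all
`y`-variables. -/
def vtNorm (d n' m : ℕ) (V : (Fin (n' + 1) → Vd d) → (Fin m → Vd d) → ℝ) : ℝ :=
  ⨆ x₁ : Vd d,
    ∫ p in (Set.univ.pi fun _ : Fin n' => fundDom d) ×ˢ (Set.univ : Set (Fin m → Vd d)),
      |V (Fin.cons x₁ p.1) p.2|

/-- Membership in the space `𝒱_t^𝕄` of translation-invariant kernels, in a flat encoding:
the kernel `V` has `n'+1` `x`-variables and `m` `y`-variables, and `g t` records the index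
of the `x`-variable to whose group the `y`-variable `t` belongs. -/
structure IsVt (d n' m : ℕ) (g : Fin m → Fin (n' + 1))
    (V : (Fin (n' + 1) → Vd d) → (Fin m → Vd d) → ℝ) : Prop where
  continuous : Continuous fun p : (Fin (n' + 1) → Vd d) × (Fin m → Vd d) => V p.1 p.2
  periodic : ∀ (x : Fin (n' + 1) → Vd d) (y : Fin m → Vd d) (q : Fin (n' + 1)) (i : Fin d),
    V (Function.update x q (x q + Pi.single i (2 * Real.pi)))
        (fun t => y t + (Function.update x q (x q + Pi.single i (2 * Real.pi))) (g t))
      = V x fun t => y t + x (g t)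
  trans : ∀ (z : Vd d) (x : Fin (n' + 1) → Vd d) (y : Fin m → Vd d),
    V (fun j => x j + z) (fun t => y t + z) = V x y
  integrable : ∀ x₁ : Vd d,
    IntegrableOn (fun p : (Fin n' → Vd d) × (Fin m → Vd d) => V (Fin.cons x₁ p.1) p.2)
      ((Set.univ.pi fun _ : Fin n' => fundDom d) ×ˢ Set.univ)
  bdd : BddAbove (Set.range fun x₁ : Vd d =>
    ∫ p in (Set.univ.pi fun _ : Fin n' => fundDom d) ×ˢ (Set.univ : Set (Fin m → Vd d)),
      |V (Fin.cons x₁ p.1) p.2|)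

/-- The convolution `K^{⊗(n+m)} ∗ V` in each of the `n+m` `ℝ^d`-variables of `V`. -/
def convVt (d n' m : ℕ) (K : Vd d → ℝ)
    (V : (Fin (n' + 1) → Vd d) → (Fin m → Vd d) → ℝ)
    (x : Fin (n' + 1) → Vd d) (y : Fin m → Vd d) : ℝ :=
  ∫ p : (Fin (n' + 1) → Vd d) × (Fin m → Vd d),
    (∏ j, K (x j - p.1 j)) * (∏ t, K (y t - p.2 t)) * V p.1 p.2

/-! ### The ratio of two Bessel multipliers is a characteristic function -/

lemma charFunDual_withDensity_ofReal {E : Type*} [NormedAddCommGroup E] [NormedSpace ℝ E]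
    [MeasurableSpace E] {μ : Measure E} {f : E → ℝ} (hf : AEMeasurable f μ) (h0 : ∀ x, 0 ≤ f x)
    (L : StrongDual ℝ E) :
    charFunDual (μ.withDensity fun x => ENNReal.ofReal (f x)) L
      = ∫ x, (f x : ℂ) * Complex.exp (L x * Complex.I) ∂μ := by
  rw [charFunDual_apply, integral_withDensity_eq_integral_toReal_smul₀ hf.ennreal_ofReal (by simp)]
  refine integral_congr_ae (Filter.Eventually.of_forall fun x => ?_)
  simp [ENNReal.toReal_ofReal (h0 x)]

/-- The exponential distribution of rate one. -/
def expLaw : Measure ℝ :=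
  (volume.restrict (Set.Ioi (0 : ℝ))).withDensity fun t => ENNReal.ofReal (Real.exp (-t))

lemma integral_expLaw (c : ℝ) (hc : 0 ≤ c) :
    ∫ t, Complex.exp (-(t * c : ℝ)) ∂expLaw = ((1 + c : ℝ) : ℂ)⁻¹ := by
  unfold expLaw
  rw [integral_withDensity_eq_integral_toReal_smul₀ (by fun_prop) (by simp)]
  have h := integral_exp_mul_complex_Ioi (a := -(1 + c : ℝ)) (by
    simp only [Complex.neg_re, Complex.ofReal_re]; linarith) 0
  simp only [Complex.ofReal_zero, mul_zero, Complex.exp_zero, neg_div_neg_eq, one_div] at h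
  rw [← h]
  refine integral_congr_ae (Filter.Eventually.of_forall fun t => ?_)
  simp only [ENNReal.toReal_ofReal (Real.exp_pos _).le, Complex.real_smul, Complex.ofReal_exp,
    ← Complex.exp_add]
  congr 1
  push_cast
  ring

lemma ae_expLaw_pos : ∀ᵐ t ∂expLaw, 0 < t := by
  refine (withDensity_absolutelyContinuous _ _).ae_le ?_
  exact ae_restrict_mem measurableSet_Ioi

instance : IsProbabilityMeasure expLaw := by
  constructor
  unfold expLaw
  rw [withDensity_apply _ MeasurableSet.univ, Measure.restrict_univ,
    ← ofReal_integral_eq_lintegral_ofReal]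
  · simp [integral_exp_Iic]
  · exact integrableOn_exp_neg_Ioi 0
  · exact Filter.Eventually.of_forall fun t => (Real.exp_pos _).le

lemma charFunDual_stdGaussian_pi (d : ℕ) (L : StrongDual ℝ (Vd d)) :
    charFunDual (Measure.pi fun _ : Fin d => ProbabilityTheory.gaussianReal 0 1) L
      = Complex.exp (-((∑ i, L (Pi.single i 1) ^ 2) / 2 : ℝ)) := by
  rw [charFunDual_pi]
  have : ∀ i : Fin d, charFunDual (ProbabilityTheory.gaussianReal 0 1)
      (L.comp (.single ℝ (fun _ => ℝ) i)) = Complex.exp (-(L (Pi.single i 1) ^ 2 / 2 : ℝ)) := by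
    intro i
    have h := ProbabilityTheory.charFun_gaussianReal (μ := 0) (v := 1) (L (Pi.single i 1))
    rw [charFun_apply_real] at h
    rw [charFunDual_apply]
    have e : ∀ x : ℝ, L (Pi.single i x) = L (Pi.single i 1) * x := by
      intro x
      rw [mul_comm, ← smul_eq_mul, ← map_smul, ← Pi.single_smul, smul_eq_mul, mul_one]
    have e' : ∀ x : ℝ, (L.comp (.single ℝ (fun _ => ℝ) i)) x = L (Pi.single i 1) * x := e
    simp only [e', Complex.ofReal_mul]
    rw [h]
    congr 1
    push_cast
    ring
  simp only [this, ← Complex.exp_sum]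
  congr 1
  push_cast
  rw [Finset.sum_neg_distrib, Finset.sum_div]

/-- The fundamental solution of `1 - a²Δ` is a probability measure: it is the law of
`a √(2T) Z`, with `T` exponential and `Z` an independent standard Gaussian vector. -/
lemma exists_besselOne (d : ℕ) (a : ℝ) :
    ∃ B : Measure (Vd d), IsProbabilityMeasure B ∧ ∀ L : StrongDual ℝ (Vd d),
      charFunDual B L = ((1 + a ^ 2 * ∑ i, L (Pi.single i 1) ^ 2 : ℝ) : ℂ)⁻¹ := by
  let γ : Measure (Vd d) := Measure.pi fun _ : Fin d => ProbabilityTheory.gaussianReal 0 1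
  have hm : Measurable fun p : ℝ × Vd d => (a * √(2 * p.1)) • p.2 := by fun_prop
  refine ⟨(expLaw.prod γ).map fun p => (a * √(2 * p.1)) • p.2,
    Measure.isProbabilityMeasure_map hm.aemeasurable, fun L => ?_⟩
  rw [charFunDual_apply, integral_map hm.aemeasurable (by fun_prop), integral_prod]
  · rw [← integral_expLaw _ (by positivity)]
    refine integral_congr_ae (ae_expLaw_pos.mono fun t ht => ?_)
    have h := charFunDual_stdGaussian_pi d ((a * √(2 * t)) • L)
    rw [charFunDual_apply] at h
    simp only [smul_apply] at h
    simp only [map_smul]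
    refine h.trans ?_
    congr 3
    simp only [smul_eq_mul, mul_pow, Real.sq_sqrt (by positivity : 0 ≤ 2 * t), ← Finset.mul_sum]
    ring
  · refine (integrable_const (1 : ℝ)).mono (by fun_prop) (Filter.Eventually.of_forall fun p => ?_)
    rw [Complex.norm_exp_ofReal_mul_I, norm_one]

lemma exists_convPow {E : Type*} [NormedAddCommGroup E] [NormedSpace ℝ E] [MeasurableSpace E]
    [BorelSpace E] [SecondCountableTopology E] (ρ : Measure E) [IsProbabilityMeasure ρ] (k : ℕ) :
    ∃ ν : Measure E, IsProbabilityMeasure ν ∧ ∀ L, charFunDual ν L = charFunDual ρ L ^ k := by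
  induction k with
  | zero => exact ⟨Measure.dirac 0, inferInstance, fun L => by simp⟩
  | succ k ih =>
    obtain ⟨ν, hν, h⟩ := ih
    exact ⟨ν.conv ρ, inferInstance, fun L => by rw [charFunDual_conv, h, pow_succ]⟩

/-- For `0 ≤ b ≤ a` the multiplier `((1 + b²|ξ|²) / (1 + a²|ξ|²))^k` is the characteristic
function of a probability measure, because
`(1 + b²s) / (1 + a²s) = r + (1 - r) / (1 + a²s)` with `r = b² / a² ∈ [0, 1]`. -/
lemma exists_ratio (d k : ℕ) (a b : ℝ) (ha : 0 < a) (hb : 0 ≤ b) (hba : b ≤ a) :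
    ∃ ν : Measure (Vd d), IsProbabilityMeasure ν ∧ ∀ L : StrongDual ℝ (Vd d),
      charFunDual ν L = ((((1 + b ^ 2 * ∑ i, L (Pi.single i 1) ^ 2)
        / (1 + a ^ 2 * ∑ i, L (Pi.single i 1) ^ 2)) ^ k : ℝ) : ℂ) := by
  obtain ⟨B, hB, hBL⟩ := exists_besselOne d a
  set r : ℝ := b ^ 2 / a ^ 2 with hr
  have hr0 : 0 ≤ r := by positivity
  have hr1 : r ≤ 1 := by
    rw [hr, div_le_one (by positivity)]
    gcongr
  let ρ : Measure (Vd d) :=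
    ENNReal.ofReal r • Measure.dirac 0 + ENNReal.ofReal (1 - r) • B
  have hρ : IsProbabilityMeasure ρ := ⟨by
    simp only [ρ, Measure.coe_add, Measure.coe_smul, Pi.add_apply, Pi.smul_apply, measure_univ,
      smul_eq_mul, mul_one]
    rw [← ENNReal.ofReal_add hr0 (by linarith)]
    simp⟩
  obtain ⟨ν, hν, hνL⟩ := exists_convPow ρ k
  refine ⟨ν, hν, fun L => ?_⟩
  rw [hνL, Complex.ofReal_pow]
  congr 1
  have hint : ∀ (m : Measure (Vd d)) [IsFiniteMeasure m],
      Integrable (fun v => Complex.exp (L v * Complex.I)) m := fun m _ =>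
    (integrable_const (1 : ℝ)).mono (by fun_prop) (Filter.Eventually.of_forall fun p => by
      simp [Complex.norm_exp_ofReal_mul_I])
  have h1 : charFunDual ρ L = (r : ℂ) + ((1 - r : ℝ) : ℂ) * charFunDual B L := by
    rw [charFunDual_apply, charFunDual_apply]
    simp only [ρ]
    rw [integral_add_measure ((hint _).smul_measure (by simp)) ((hint _).smul_measure (by simp)),
      integral_smul_measure, integral_smul_measure, integral_dirac,
      ENNReal.toReal_ofReal hr0, ENNReal.toReal_ofReal (by linarith)]
    simp
  rw [h1, hBL]
  norm_cast
  have hs : 0 ≤ ∑ i, L (Pi.single i 1) ^ 2 := by positivity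
  have : (1 + a ^ 2 * ∑ i, L (Pi.single i 1) ^ 2) ≠ 0 := by positivity
  rw [hr]
  field_simp
  ring

/-! ### Tensor powers of the kernels -/

/-- The space of all `x`- and `y`-variables together. -/
abbrev Gd (d n' m : ℕ) := (Fin (n' + 1) → Vd d) × (Fin m → Vd d)

instance isAddHaarMeasure_volume_blocks (d k : ℕ) :
    (volume : Measure (Fin k → Vd d)).IsAddHaarMeasure :=
  Measure.pi.isAddHaarMeasure _

instance isAddHaarMeasure_volume_Gd (d n' m : ℕ) :
    (volume : Measure (Gd d n' m)).IsAddHaarMeasure := by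
  rw [Measure.volume_eq_prod]
  infer_instance

instance isNegInvariant_volume_blocks (d k : ℕ) :
    (volume : Measure (Fin k → Vd d)).IsNegInvariant :=
  inferInstanceAs (volume : Measure (Fin k → Fin d → ℝ)).IsNegInvariant

instance isNegInvariant_volume_Gd (d n' m : ℕ) :
    (volume : Measure (Gd d n' m)).IsNegInvariant := by
  constructor
  have h := Measure.map_prod_map (volume : Measure (Fin (n' + 1) → Vd d))
    (volume : Measure (Fin m → Vd d)) measurable_neg measurable_neg
  rw [Measure.map_neg_eq_self, Measure.map_neg_eq_self] at h
  exact h.symm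

/-- The characteristic function of the measure with density `f` at a functional `L` is the Fourier
transform at minus the coefficient vector of `L`, the convention of `ft` having a minus sign. -/
lemma ft_eq_charFunDual (d : ℕ) (f : Vd d → ℝ) (hf : AEMeasurable f) (h0 : ∀ x, 0 ≤ f x)
    (L : StrongDual ℝ (Vd d)) :
    charFunDual (volume.withDensity fun x => ENNReal.ofReal (f x)) L
      = ft d f fun i => -L (Pi.single i 1) := by
  rw [charFunDual_withDensity_ofReal hf h0, ft]
  refine integral_congr_ae (Filter.Eventually.of_forall fun x => ?_)
  have hL : L x = ∑ i, x i * L (Pi.single i 1) := by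
    conv_lhs => rw [pi_eq_sum_univ' x, map_sum]
    refine Finset.sum_congr rfl fun i _ => ?_
    rw [map_smul, smul_eq_mul]
  simp only [hL]
  push_cast
  rw [mul_comm]
  congr 2
  simp only [mul_neg, Finset.sum_neg_distrib]
  ring

/-- The measure on all variables with density `K^{⊗(n+m)}`. -/
def tensorMeasure (d n' m : ℕ) (K : Vd d → ℝ) : Measure (Gd d n' m) :=
  volume.withDensity fun p => ENNReal.ofReal ((∏ j, K (p.1 j)) * ∏ t, K (p.2 t))

lemma integrable_tensor (d n' m : ℕ) (K : Vd d → ℝ) (hK : Integrable K) :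
    Integrable fun p : Gd d n' m => (∏ j, K (p.1 j)) * ∏ t, K (p.2 t) :=
  (Integrable.fintype_prod fun _ => hK).mul_prod (Integrable.fintype_prod fun _ => hK)

lemma tensor_nonneg {d n' m : ℕ} {K : Vd d → ℝ} (h0 : ∀ x, 0 ≤ K x) (p : Gd d n' m) :
    0 ≤ (∏ j, K (p.1 j)) * ∏ t, K (p.2 t) :=
  mul_nonneg (Finset.prod_nonneg fun _ _ => h0 _) (Finset.prod_nonneg fun _ _ => h0 _)

lemma isFiniteMeasure_tensorMeasure (d n' m : ℕ) (K : Vd d → ℝ) (hK : Integrable K) :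
    IsFiniteMeasure (tensorMeasure d n' m K) :=
  isFiniteMeasure_withDensity_ofReal (integrable_tensor d n' m K hK).2

lemma charFunDual_tensorMeasure (d n' m : ℕ) (K : Vd d → ℝ) (hK : Integrable K)
    (h0 : ∀ x, 0 ≤ K x) (L : StrongDual ℝ (Gd d n' m)) :
    charFunDual (tensorMeasure d n' m K) L
      = (∏ j, charFunDual (volume.withDensity fun x => ENNReal.ofReal (K x))
            ((L.comp (.inl ℝ _ _)).comp (.single ℝ (fun _ => Vd d) j))) *
        ∏ t, charFunDual (volume.withDensity fun x => ENNReal.ofReal (K x))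
            ((L.comp (.inr ℝ _ _)).comp (.single ℝ (fun _ => Vd d) t)) := by
  simp only [charFunDual_withDensity_ofReal hK.aestronglyMeasurable.aemeasurable h0]
  rw [tensorMeasure, charFunDual_withDensity_ofReal
    (integrable_tensor d n' m K hK).aestronglyMeasurable.aemeasurable (tensor_nonneg h0)]
  simp only [← integral_fintype_prod_volume_eq_prod]
  rw [← integral_prod_mul]
  refine integral_congr_ae (Filter.Eventually.of_forall fun p => ?_)
  have e : L p = (∑ j, ((L.comp (.inl ℝ _ _)).comp (.single ℝ (fun _ => Vd d) j)) (p.1 j))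
      + ∑ t, ((L.comp (.inr ℝ _ _)).comp (.single ℝ (fun _ => Vd d) t)) (p.2 t) := by
    rw [(L.comp (.inl ℝ _ _)).sum_comp_single, (L.comp (.inr ℝ _ _)).sum_comp_single,
      L.comp_inl_add_comp_inr]
  simp only [e, Finset.prod_mul_distrib, ← Complex.exp_sum, Complex.ofReal_add, Complex.ofReal_sum,
    Complex.ofReal_mul, Complex.ofReal_prod, add_mul, Complex.exp_add, Finset.sum_mul]
  ring

/-- The regularization of `V` as a convolution with a measure. Both integrals take the value zero at
the same points `p`, should absolute convergence fail there. -/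
lemma convVt_eq (d n' m : ℕ) (K : Vd d → ℝ) (hK : Integrable K) (h0 : ∀ x, 0 ≤ K x)
    (V : (Fin (n' + 1) → Vd d) → (Fin m → Vd d) → ℝ) (p : Gd d n' m) :
    convVt d n' m K V p.1 p.2
      = ∫ q, V (p - q).1 (p - q).2 ∂(tensorMeasure d n' m K) := by
  rw [tensorMeasure, integral_withDensity_eq_integral_toReal_smul₀
    (integrable_tensor d n' m K hK).aestronglyMeasurable.aemeasurable.ennreal_ofReal (by simp),
    convVt]
  rw [← integral_sub_left_eq_self _ volume p]
  refine integral_congr_ae (Filter.Eventually.of_forall fun q => ?_)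
  simp [ENNReal.toReal_ofReal (tensor_nonneg h0 _)]

/-- A probability measure taking the regularization at scale `η` to the coarser scale `μ`. -/
lemma exists_tensor_conv (d n' m : ℕ) (σ : ℝ) (hσ : 0 < σ) (K : ℝ → Vd d → ℝ)
    (hK : IsBessel d σ K) (η μ : ℝ) (hη : 0 < η) (hημ : η ≤ μ) (hμ : μ ≤ 1) :
    ∃ Q : Measure (Gd d n' m), IsProbabilityMeasure Q ∧
      tensorMeasure d n' m (K μ) = Q.conv (tensorMeasure d n' m (K η)) := by
  obtain ⟨h0μ, hiμ, -, hfμ⟩ := hK μ ⟨hη.trans_le hημ, hμ⟩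
  obtain ⟨h0η, hiη, -, hfη⟩ := hK η ⟨hη, hημ.trans hμ⟩
  have hpos : 0 < μ ^ (1 / σ) := Real.rpow_pos_of_pos (hη.trans_le hημ) _
  obtain ⟨ν, hν, hνL⟩ := exists_ratio d (d + 2) (μ ^ (1 / σ)) (η ^ (1 / σ))
    hpos (Real.rpow_nonneg hη.le _) (Real.rpow_le_rpow hη.le hημ (by positivity))
  have key : ∀ L : StrongDual ℝ (Vd d),
      charFunDual (volume.withDensity fun x => ENNReal.ofReal (K μ x)) L
        = charFunDual ν L * charFunDual (volume.withDensity fun x => ENNReal.ofReal (K η x)) L := by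
    intro L
    rw [ft_eq_charFunDual d _ hiμ.aestronglyMeasurable.aemeasurable h0μ,
      ft_eq_charFunDual d _ hiη.aestronglyMeasurable.aemeasurable h0η, hfμ, hfη, hνL]
    norm_cast
    simp only [neg_sq]
    have hs : 0 ≤ ∑ i, L (Pi.single i 1) ^ 2 := by positivity
    have h1 : 1 + (μ ^ (1 / σ)) ^ 2 * ∑ i, L (Pi.single i 1) ^ 2 ≠ 0 := by positivity
    have h2 : 1 + (η ^ (1 / σ)) ^ 2 * ∑ i, L (Pi.single i 1) ^ 2 ≠ 0 := by positivity
    rw [div_pow, div_mul_eq_mul_div, mul_inv_cancel₀ (pow_ne_zero _ h2)]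
    exact (one_div _).symm
  have := isFiniteMeasure_tensorMeasure d n' m (K μ) hiμ
  have := isFiniteMeasure_tensorMeasure d n' m (K η) hiη
  refine ⟨(Measure.pi fun _ => ν).prod (Measure.pi fun _ => ν), inferInstance, ?_⟩
  refine Measure.ext_of_charFunDual (funext fun L => ?_)
  rw [charFunDual_conv, charFunDual_prod, charFunDual_pi, charFunDual_pi,
    charFunDual_tensorMeasure d n' m _ hiμ h0μ, charFunDual_tensorMeasure d n' m _ hiη h0η]
  simp only [key, Finset.prod_mul_distrib]
  ring

/-! ### Periodic functions on the fundamental domain -/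

open scoped Pointwise in
/-- The integral of a periodic function over the fundamental domain is translation invariant. -/
lemma setLIntegral_fundDom_sub (d k : ℕ) (f : (Fin k → Vd d) → ℝ≥0∞)
    (hf : ∀ x j i, f (x + Pi.single j (Pi.single i (2 * Real.pi))) = f x) (u : Fin k → Vd d) :
    ∫⁻ x in Set.univ.pi fun _ : Fin k => fundDom d, f (x - u)
      = ∫⁻ x in Set.univ.pi fun _ : Fin k => fundDom d, f x := by
  have h2π : (0 : ℝ) < 2 * Real.pi := by positivity
  let b : Module.Basis (Σ _ : Fin k, Fin d) ℝ (Fin k → Vd d) :=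
    (Pi.basis fun _ => Pi.basisFun ℝ (Fin d)).isUnitSMul (w := fun _ => 2 * Real.pi)
      fun _ => h2π.ne'.isUnit
  have hb : ∀ j i, b ⟨j, i⟩ = Pi.single j (Pi.single i (2 * Real.pi)) := by
    intro j i
    simp only [b, Module.Basis.isUnitSMul_apply, Pi.basis_apply, Pi.basisFun_apply]
    rw [← Pi.single_smul, ← Pi.single_smul, smul_eq_mul, mul_one]
  have hrepr : ∀ x j i, b.repr x ⟨j, i⟩ = (2 * Real.pi)⁻¹ * x j i := by
    intro x j i
    simp [b, Module.Basis.repr_isUnitSMul, Units.smul_def]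
  have hinv : ∀ (g : Submodule.span ℤ (Set.range b)) (x), f (g +ᵥ x) = f x := by
    rintro ⟨g, hg⟩ x
    change f (g + x) = f x
    induction hg using Submodule.span_induction generalizing x with
    | mem y hy =>
      obtain ⟨⟨j, i⟩, rfl⟩ := hy
      rw [hb, add_comm, hf]
    | zero => simp
    | add y z _ _ hy hz => rw [add_assoc, hy, hz]
    | smul n y _ hy =>
      induction n generalizing x with
      | zero => simp
      | succ n ih => rw [add_smul, one_smul, add_assoc, ih, hy]
      | pred n ih => rw [← hy, sub_smul, one_smul, ← add_assoc, add_sub_cancel, ih]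
  -- The half-open cube `[-π, π)` is a translate of the fundamental parallelepiped `[0, 2π)`.
  have hF : (Set.univ.pi fun _ : Fin k => fundDom d)
      = (fun _ _ => -Real.pi : Fin k → Vd d) +ᵥ ZSpan.fundamentalDomain b := by
    ext x
    rw [Set.mem_vadd_set_iff_neg_vadd_mem, ZSpan.mem_fundamentalDomain]
    simp only [Set.mem_pi, Set.mem_univ, true_imp_iff, fundDom, Set.mem_Ico, Sigma.forall, hrepr,
      vadd_eq_add, Pi.add_apply, Pi.neg_apply, neg_neg]
    refine forall_congr' fun j => forall_congr' fun i => ?_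
    rw [inv_mul_lt_iff₀ h2π, mul_one, mul_nonneg_iff_of_pos_left (by positivity)]
    constructor <;> rintro ⟨h1, h2⟩ <;> constructor <;> linarith
  have hfd : ∀ v : Fin k → Vd d,
      IsAddFundamentalDomain (Submodule.span ℤ (Set.range b)) (v +ᵥ ZSpan.fundamentalDomain b)
        (volume : Measure (Fin k → Vd d)) :=
    fun v => (ZSpan.isAddFundamentalDomain b volume).vadd_of_comm v
  -- The substitution `x ↦ x - u` moves the integral to a translate of the fundamental domain,
  -- which is again a fundamental domain of the lattice.
  have hmp := (measurePreserving_sub_right (volume : Measure (Fin k → Vd d)) u)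
    |>.setLIntegral_comp_preimage_emb (measurableEmbedding_subRight u) f
      (-u +ᵥ (Set.univ.pi fun _ : Fin k => fundDom d))
  have hpre : (fun x => x - u) ⁻¹' (-u +ᵥ (Set.univ.pi fun _ : Fin k => fundDom d))
      = Set.univ.pi fun _ : Fin k => fundDom d := by
    ext x
    rw [Set.mem_preimage, Set.mem_vadd_set_iff_neg_vadd_mem]
    simp
  rw [hpre] at hmp
  have : VAddInvariantMeasure (Submodule.span ℤ (Set.range b)) (Fin k → Vd d) volume :=
    ⟨fun c s _ => measure_preimage_add volume (c : Fin k → Vd d) s⟩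
  rw [hmp, hF, ← add_vadd]
  exact (hfd _).setLIntegral_eq (hfd _) f hinv

/-! ### Slice integrals and convolutions -/

/-- The integral of `W` over all variables except `x₁`, the `x`-variables being taken in the
fundamental domain; `vtNorm` is the supremum of these for `W = |V|`. -/
def slice (d n' m : ℕ) (W : Gd d n' m → ℝ≥0∞) (x₁ : Vd d) : ℝ≥0∞ :=
  ∫⁻ p in (Set.univ.pi fun _ : Fin n' => fundDom d) ×ˢ (Set.univ : Set (Fin m → Vd d)),
    W (Fin.cons x₁ p.1, p.2)

/-- The shift of the `i`-th coordinate of `x_q` by `2π`, together with the corresponding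
coordinate of every `y`-variable in the group of `x_q`. -/
def period {d n' m : ℕ} (g : Fin m → Fin (n' + 1)) (q : Fin (n' + 1)) (i : Fin d) : Gd d n' m :=
  (Pi.single q (Pi.single i (2 * Real.pi)),
    fun t => (Pi.single q (Pi.single i (2 * Real.pi)) : Fin (n' + 1) → Vd d) (g t))

/-- Invariance under all simultaneous shifts of an `x`-variable and its group of `y`-variables. -/
def IsPer {d n' m : ℕ} {α : Type*} (g : Fin m → Fin (n' + 1)) (W : Gd d n' m → α) : Prop :=
  ∀ p q i, W (p + period g q i) = W p

/-- The convolution of a function with a measure (zero where the integral does not converge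
absolutely). -/
def cv {d n' m : ℕ} (P : Measure (Gd d n' m)) (F : Gd d n' m → ℝ) (p : Gd d n' m) : ℝ :=
  ∫ q, F (p - q) ∂P

lemma measurable_cons {d n' m : ℕ} (x₁ : Vd d) :
    Measurable fun p : (Fin n' → Vd d) × (Fin m → Vd d) =>
      ((Fin.cons x₁ p.1, p.2) : Gd d n' m) := by
  refine Measurable.prodMk ?_ measurable_snd
  refine measurable_pi_iff.2 fun j => ?_
  refine Fin.cases ?_ (fun j => ?_) j
  · simp only [Fin.cons_zero]; fun_prop
  · simp only [Fin.cons_succ]; fun_prop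

lemma IsPer.enorm {d n' m : ℕ} {g : Fin m → Fin (n' + 1)} {F : Gd d n' m → ℝ}
    (h : IsPer g F) : IsPer g fun p => ‖F p‖ₑ :=
  fun p q i => congrArg _ (h p q i)

/-- Translating `W` by `u` only moves the distinguished variable `x₁`: the `y`-variables range over
the whole space, and after integrating them out the result is periodic in each `x`-variable
separately, since the accompanying shift of the `y`-variables is absorbed. -/
lemma slice_sub {d n' m : ℕ} {g : Fin m → Fin (n' + 1)} {W : Gd d n' m → ℝ≥0∞}
    (hW : Measurable W) (hper : IsPer g W) (u : Gd d n' m) (x₁ : Vd d) :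
    slice d n' m (fun p => W (p - u)) x₁ = slice d n' m W (x₁ - u.1 0) := by
  have hres : (volume.restrict ((Set.univ.pi fun _ : Fin n' => fundDom d) ×ˢ
      (Set.univ : Set (Fin m → Vd d)))) =
      (volume.restrict (Set.univ.pi fun _ : Fin n' => fundDom d)).prod volume := by
    rw [Measure.volume_eq_prod, ← Measure.prod_restrict, Measure.restrict_univ]
  unfold slice
  have hm₁ : Measurable fun p : (Fin n' → Vd d) × (Fin m → Vd d) =>
      W (((Fin.cons x₁ p.1, p.2) : Gd d n' m) - u) :=
    hW.comp ((measurable_cons x₁).sub_const u)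
  have hm₂ : Measurable fun p : (Fin n' → Vd d) × (Fin m → Vd d) =>
      W (Fin.cons (x₁ - u.1 0) p.1, p.2) := hW.comp (measurable_cons _)
  beta_reduce
  rw [hres, lintegral_prod _ hm₁.aemeasurable, lintegral_prod _ hm₂.aemeasurable]
  have hh : ∀ (x : Fin (n' + 1) → Vd d) q i,
      ∫⁻ y, W (x + Pi.single q (Pi.single i (2 * Real.pi)), y) = ∫⁻ y, W (x, y) := by
    intro x q i
    rw [← lintegral_add_right_eq_self _ (period (d := d) g q i).2]
    exact lintegral_congr fun y => hper (x, y) q i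
  rw [← setLIntegral_fundDom_sub d n' (fun x => ∫⁻ y, W (Fin.cons (x₁ - u.1 0) x, y)) _
    (Fin.tail u.1)]
  · refine lintegral_congr fun x => ?_
    rw [← lintegral_sub_right_eq_self
      (fun y => W (Fin.cons (x₁ - u.1 0) (x - Fin.tail u.1), y)) u.2]
    refine lintegral_congr fun y => ?_
    congr 1
    refine Prod.ext ?_ rfl
    funext j
    refine Fin.cases ?_ (fun j => ?_) j <;> simp [Fin.tail]
  · intro x j i
    rw [← hh (Fin.cons (x₁ - u.1 0) x) j.succ i]
    congr 1 with y
    congr 2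
    funext l
    refine Fin.cases ?_ (fun l => ?_) l
    · simp
    · simp [Pi.single_apply]

lemma slice_lintegral {d n' m : ℕ} {g : Fin m → Fin (n' + 1)} {W : Gd d n' m → ℝ≥0∞}
    (hW : Measurable W) (hper : IsPer g W) (P : Measure (Gd d n' m)) [SFinite P] (x₁ : Vd d) :
    slice d n' m (fun p => ∫⁻ q, W (p - q) ∂P) x₁ = ∫⁻ q, slice d n' m W (x₁ - q.1 0) ∂P := by
  simp only [← slice_sub hW hper]
  unfold slice
  rw [lintegral_lintegral_swap]
  refine Measurable.aemeasurable ?_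
  exact hW.comp (((measurable_cons x₁).comp measurable_fst).sub measurable_snd)

lemma IsPer.cv {d n' m : ℕ} {g : Fin m → Fin (n' + 1)} {F : Gd d n' m → ℝ} (h : IsPer g F)
    (P : Measure (Gd d n' m)) : IsPer g (cv P F) := by
  intro p q i
  unfold _root_.cv
  congr 1 with u
  rw [add_sub_right_comm, h]

lemma measurable_cv {d n' m : ℕ} {F : Gd d n' m → ℝ} (h : Measurable F)
    (P : Measure (Gd d n' m)) [SFinite P] : Measurable (cv P F) := by
  refine StronglyMeasurable.measurable ?_
  refine StronglyMeasurable.integral_prod_right' (f := fun z : Gd d n' m × Gd d n' m =>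
    F (z.1 - z.2)) ?_
  exact (h.comp (measurable_fst.sub measurable_snd)).stronglyMeasurable

lemma slice_mass_le {d n' m : ℕ} {g : Fin m → Fin (n' + 1)} {W : Gd d n' m → ℝ≥0∞}
    (hW : Measurable W) (hper : IsPer g W) (P : Measure (Gd d n' m)) [SFinite P] (x₁ : Vd d) :
    slice d n' m (fun p => ∫⁻ q, W (p - q) ∂P) x₁ ≤ (⨆ x, slice d n' m W x) * P Set.univ := by
  rw [slice_lintegral hW hper, ← lintegral_const]
  exact lintegral_mono fun q => le_iSup (slice d n' m W) _

lemma slice_cv_le {d n' m : ℕ} {g : Fin m → Fin (n' + 1)} {F : Gd d n' m → ℝ}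
    (hF : Measurable F) (hper : IsPer g F) (P : Measure (Gd d n' m)) [SFinite P] (x₁ : Vd d) :
    slice d n' m (fun p => ‖cv P F p‖ₑ) x₁ ≤ (⨆ x, slice d n' m (fun p => ‖F p‖ₑ) x) * P Set.univ :=
  (lintegral_mono fun _ => enorm_integral_le_lintegral_enorm _).trans
    (slice_mass_le (W := fun p => ‖F p‖ₑ) hF.enorm hper.enorm P x₁)

/-- Convolving further with a probability measure `Q` does not increase the norm. The iterated
convolution agrees with `Q ∗ P` only where the integral converges absolutely, which is the case
almost everywhere on each slice because the norm of `F` is finite. -/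
lemma slice_cv_conv_le {d n' m : ℕ} {g : Fin m → Fin (n' + 1)} {F : Gd d n' m → ℝ}
    (hF : Measurable F) (hper : IsPer g F) (hfin : (⨆ x, slice d n' m (fun p => ‖F p‖ₑ) x) ≠ ∞)
    (Q P : Measure (Gd d n' m)) [IsProbabilityMeasure Q] [IsFiniteMeasure P] (x₁ : Vd d) :
    slice d n' m (fun p => ‖cv (Q.conv P) F p‖ₑ) x₁
      ≤ ⨆ x, slice d n' m (fun p => ‖cv P F p‖ₑ) x := by
  have hW : Measurable fun p => ‖F p‖ₑ := hF.enorm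
  have hcvm := measurable_cv hF P
  have hlt : slice d n' m (fun p => ∫⁻ q, ‖F (p - q)‖ₑ ∂(Q.conv P)) x₁ ≠ ∞ :=
    ne_top_of_le_ne_top (ENNReal.mul_ne_top hfin (measure_ne_top _ _))
      (slice_mass_le (W := fun p => ‖F p‖ₑ) hW hper.enorm (Q.conv P) x₁)
  have hae := ae_lt_top (μ := volume.restrict _) (by
    refine Measurable.lintegral_prod_right' (ν := Q.conv P)
      (f := fun z : ((Fin n' → Vd d) × (Fin m → Vd d)) × Gd d n' m => ‖F ((Fin.cons x₁ z.1.1, z.1.2) - z.2)‖ₑ) ?_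
    exact hW.comp (((measurable_cons x₁).comp measurable_fst).sub measurable_snd)) hlt
  calc slice d n' m (fun p => ‖cv (Q.conv P) F p‖ₑ) x₁
      ≤ slice d n' m (fun p => ∫⁻ q, ‖cv P F (p - q)‖ₑ ∂Q) x₁ := by
        refine lintegral_mono_ae (hae.mono fun p hp => ?_)
        have hint : Integrable (fun q => F ((Fin.cons x₁ p.1, p.2) - q)) (Q.conv P) :=
          ⟨(hF.comp (measurable_const.sub measurable_id)).aestronglyMeasurable, hp⟩
        have h : cv (Q.conv P) F (Fin.cons x₁ p.1, p.2)
            = ∫ q, cv P F ((Fin.cons x₁ p.1, p.2) - q) ∂Q := by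
          unfold cv
          rw [integral_conv hint]
          simp only [sub_sub]
        simp only [h]
        exact enorm_integral_le_lintegral_enorm _
    _ = ∫⁻ q, slice d n' m (fun p => ‖cv P F p‖ₑ) (x₁ - q.1 0) ∂Q :=
        slice_lintegral (W := fun p => ‖cv P F p‖ₑ) hcvm.enorm
          (hper.cv P).enorm Q x₁
    _ ≤ ∫⁻ _, (⨆ x, slice d n' m (fun p => ‖cv P F p‖ₑ) x) ∂Q :=
        lintegral_mono fun q => le_iSup (slice d n' m fun p => ‖cv P F p‖ₑ) _
    _ = ⨆ x, slice d n' m (fun p => ‖cv P F p‖ₑ) x := by simp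

/-- `vtNorm` is a supremum of Bochner integrals; when the extended norm is finite it agrees with the
extended norm, so that no junk value enters. -/
lemma vtNorm_eq {d n' m : ℕ} {V : (Fin (n' + 1) → Vd d) → (Fin m → Vd d) → ℝ}
    (hV : Measurable fun p : Gd d n' m => V p.1 p.2)
    (hfin : (⨆ x, slice d n' m (fun p => ‖V p.1 p.2‖ₑ) x) ≠ ∞) :
    vtNorm d n' m V = (⨆ x, slice d n' m (fun p => ‖V p.1 p.2‖ₑ) x).toReal := by
  rw [ENNReal.toReal_iSup fun x => ne_top_of_le_ne_top hfin (le_iSup _ x)]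
  unfold vtNorm
  congr 1 with x
  exact integral_norm_eq_lintegral_enorm (hV.comp (measurable_cons x)).aestronglyMeasurable

/-! ### Monotonicity of the norms -/

/-- Monotonicity of regularized `𝒱_t` norms in the regularization scale:
for `0 < η ≤ μ ≤ 1` one has `‖K̃_μ^{⊗(n+m)}∗V‖_{𝒱_t^𝕄} ≤ ‖K̃_η^{⊗(n+m)}∗V‖_{𝒱_t^𝕄}`. -/
theorem stmt16 (d n' m : ℕ) (hd : 0 < d) (σ : ℝ) (hσ : 0 < σ)
    (K : ℝ → Vd d → ℝ) (hK : IsBessel d σ K) :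
    ∀ η μ : ℝ, 0 < η → η ≤ μ → μ ≤ 1 →
      ∀ (g : Fin m → Fin (n' + 1)) (V : (Fin (n' + 1) → Vd d) → (Fin m → Vd d) → ℝ),
        IsVt d n' m g V →
        vtNorm d n' m (convVt d n' m (K μ) V) ≤ vtNorm d n' m (convVt d n' m (K η) V) := by
  intro η μ hη hημ hμ g V hV
  obtain ⟨h0μ, hiμ, -, -⟩ := hK μ ⟨hη.trans_le hημ, hμ⟩
  obtain ⟨h0η, hiη, -, -⟩ := hK η ⟨hη, hημ.trans hμ⟩
  obtain ⟨Q, hQ, hQc⟩ := exists_tensor_conv d n' m σ hσ K hK η μ hη hημ hμ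
  have := isFiniteMeasure_tensorMeasure d n' m (K μ) hiμ
  have := isFiniteMeasure_tensorMeasure d n' m (K η) hiη
  let F : Gd d n' m → ℝ := fun p => V p.1 p.2
  have hF : Measurable F := hV.continuous.measurable
  -- The periodicity hypothesis is stated in the coordinates `y_t - x_{g t}`; evaluating it there
  -- gives invariance of `V` under the simultaneous shifts.
  have hper : IsPer g F := by
    intro p q i
    have h := hV.periodic p.1 (fun t => p.2 t - p.1 (g t)) q i
    have e1 : Function.update p.1 q (p.1 q + Pi.single i (2 * Real.pi))
        = p.1 + Pi.single q (Pi.single i (2 * Real.pi)) := by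
      funext j
      by_cases hj : j = q
      · subst hj; simp
      · simp [hj]
    simp only [e1, sub_add_cancel] at h
    rw [← show V p.1 p.2 = F p from rfl, ← h]
    simp only [F, period, Prod.fst_add, Prod.snd_add]
    congr 1
    funext t
    simp only [Pi.add_apply]
    abel
  have hfin : (⨆ x, slice d n' m (fun p => ‖F p‖ₑ) x) ≠ ∞ := by
    obtain ⟨C, hC⟩ := hV.bdd
    refine ne_top_of_le_ne_top (ENNReal.ofReal_ne_top (r := C)) (iSup_le fun x => ?_)
    have h1 := ofReal_integral_norm_eq_lintegral_enorm (hV.integrable x)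
    exact h1.symm.le.trans (ENNReal.ofReal_le_ofReal (hC ⟨x, rfl⟩))
  have hcv : ∀ ν : ℝ, (∀ x, 0 ≤ K ν x) → Integrable (K ν) →
      (fun p : Gd d n' m => convVt d n' m (K ν) V p.1 p.2)
        = cv (tensorMeasure d n' m (K ν)) F :=
    fun ν h0 hi => funext fun p => convVt_eq d n' m (K ν) hi h0 V p
  have hfin' : ∀ P : Measure (Gd d n' m), IsFiniteMeasure P →
      (⨆ x, slice d n' m (fun p => ‖cv P F p‖ₑ) x) ≠ ∞ := fun P _ =>
    ne_top_of_le_ne_top (ENNReal.mul_ne_top hfin (measure_ne_top P _))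
      (iSup_le fun x => slice_cv_le hF hper P x)
  have hnorm : ∀ ν : ℝ, (∀ x, 0 ≤ K ν x) → Integrable (K ν) →
      vtNorm d n' m (convVt d n' m (K ν) V)
        = (⨆ x, slice d n' m (fun p => ‖cv (tensorMeasure d n' m (K ν)) F p‖ₑ) x).toReal := by
    intro ν h0 hi
    have := isFiniteMeasure_tensorMeasure d n' m (K ν) hi
    have h := hcv ν h0 hi
    rw [vtNorm_eq]
    · simp only [← h]
    · rw [h]; exact measurable_cv hF _
    · simpa only [← h] using hfin' (tensorMeasure d n' m (K ν)) this
  rw [hnorm μ h0μ hiμ, hnorm η h0η hiη, hQc]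
  exact ENNReal.toReal_mono (hfin' _ inferInstance)
    (iSup_le fun x => slice_cv_conv_le hF hper hfin Q _ x)
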